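/- arXiv:1911.12140 — 3 statements merged into one kernel-verified Lean document; each statement's English description precedes it below -/
import Mathlib

section
/- Fix n ≥ 1 with i_n ≥ 1 and i_k = 0 for all k > n, and define the second representation (i'_k) of the same Q-rational number by i'_k = i_k for k < n, i'_n = i_n − 1, and i'_k = q_k − 1 for k > n. Then for every m ≥ 1 with m ≠ n, the generalized shift σ_m gives the same value on both representations: Σ_{k<m} i_k/(q_1⋯q_k) + Σ_{l>m} i_l/(q_1⋯q_{m−1}q_{m+1}⋯q_l) = Σ_{k<m} i'_k/(q_1⋯q_k) + Σ_{l>m} i'_l/(q_1⋯q_{m−1}q_{m+1}⋯q_l). -/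
/-- `q_1 q_2 ⋯ q_n` (1-based indexing; `prodQ q 0 = 1`). -/
noncomputable def prodQ (q : ℕ → ℕ) (n : ℕ) : ℝ :=
  ∏ j ∈ Finset.Icc 1 n, (q j : ℝ)

/-- The positive Cantor series value `x = Σ_{n=1}^∞ i_n/(q_1 ⋯ q_n)`. -/
noncomputable def cantorVal (q i : ℕ → ℕ) : ℝ :=
  ∑' n : ℕ, (i (n + 1) : ℝ) / prodQ q (n + 1)

/-- The generalized shift operator
`σ_m = Σ_{k=1}^{m-1} i_k/(q_1⋯q_k) + Σ_{l=m+1}^∞ i_l/(q_1⋯q_{m-1} q_{m+1}⋯q_l)`. -/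
noncomputable def sigmaC (q i : ℕ → ℕ) (m : ℕ) : ℝ :=
  (∑ k ∈ Finset.Icc 1 (m - 1), (i k : ℝ) / prodQ q k) +
    ∑' t : ℕ, (i (m + 1 + t) : ℝ) /
      (prodQ q (m - 1) * ∏ j ∈ Finset.Icc (m + 1) (m + 1 + t), (q j : ℝ))

/-- The `m`-fold shift `σ^m(x) = Σ_{k=m+1}^∞ i_k/(q_{m+1} ⋯ q_k)`. -/
noncomputable def shiftVal (q i : ℕ → ℕ) (m : ℕ) : ℝ :=
  ∑' t : ℕ, (i (m + 1 + t) : ℝ) / ∏ j ∈ Finset.Icc (m + 1) (m + 1 + t), (q j : ℝ)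

/-!
Deleting the `m`-th entry of the base sequence and of the digit sequence turns `σ_m` into an
ordinary Cantor series value. Deletion is reindexing along a strictly increasing map, so it carries
the second representation at a position other than `m` to a second representation of the shortened
sequence. It therefore suffices that both representations have the same Cantor value, and this is
the telescoping identity `∑_{k > n} (q_k - 1)/(q_1 ⋯ q_k) = 1/(q_1 ⋯ q_n)`, valid as soon as
`q_1 ⋯ q_k → ∞`.
-/

open Filter Finset

/-- `HasCantorSum q i x` says that the Cantor series with bases `q` and digits `i` converges to `x`.
As in `cantorVal`, indices start at `1` and the digits are not required to satisfy `i k < q k`. -/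
def HasCantorSum (q i : ℕ → ℕ) (x : ℝ) : Prop :=
  HasSum (fun k => (i (k + 1) : ℝ) / prodQ q (k + 1)) x

/-- The second representation of the number whose last nonzero digit is `i n`: that digit is lowered
by one, and all later digits are maximal. -/
def secondRep (q i : ℕ → ℕ) (n k : ℕ) : ℕ :=
  if k < n then i k else if k = n then i n - 1 else q k - 1

/-- The increasing enumeration of the natural numbers other than `m`; composing a sequence with it
deletes the `m`-th entry. It is the counterpart for `ℕ` of `Fin.succAbove`. -/
def skipIndex (m k : ℕ) : ℕ :=
  if k < m then k else k + 1

section prodQ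

variable {q : ℕ → ℕ}

lemma prodQ_succ (q : ℕ → ℕ) (n : ℕ) : prodQ q (n + 1) = prodQ q n * q (n + 1) :=
  prod_Icc_succ_top (by lia) _

lemma tendsto_prodQ_atTop (hq : ∀ n, 1 ≤ n → 2 ≤ q n) : Tendsto (prodQ q) atTop atTop := by
  refine tendsto_atTop_mono (fun n => ?_)
    (tendsto_pow_atTop_atTop_of_one_lt (one_lt_two : (1 : ℝ) < 2))
  calc (2 : ℝ) ^ n = ∏ _j ∈ Icc 1 n, (2 : ℝ) := by simp
    _ ≤ prodQ q n := prod_le_prod (fun _ _ => zero_le_two) fun j hj =>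
      mod_cast hq j (mem_Icc.1 hj).1

lemma prodQ_pos (hP : Tendsto (prodQ q) atTop atTop) (n : ℕ) : 0 < prodQ q n := by
  obtain ⟨N, hN, hnN⟩ := ((hP.eventually_gt_atTop 0).and (eventually_ge_atTop n)).exists
  refine prod_pos fun j hj => (Nat.cast_nonneg _).lt_of_ne' fun hj0 => hN.ne' ?_
  exact prod_eq_zero (Icc_subset_Icc_right hnN hj) hj0

lemma base_pos (hP : Tendsto (prodQ q) atTop atTop) (n : ℕ) : 0 < q (n + 1) := by
  have h := prodQ_pos hP (n + 1)
  rw [prodQ_succ] at h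
  exact_mod_cast pos_of_mul_pos_right h (prodQ_pos hP n).le

lemma pred_div_prodQ_succ (hP : Tendsto (prodQ q) atTop atTop) (n : ℕ) :
    ((q (n + 1) - 1 : ℕ) : ℝ) / prodQ q (n + 1) = 1 / prodQ q n - 1 / prodQ q (n + 1) := by
  have hprod := (prodQ_pos hP n).ne'
  have hbase : (q (n + 1) : ℝ) ≠ 0 := mod_cast (base_pos hP n).ne'
  rw [Nat.cast_pred (base_pos hP n), prodQ_succ]
  field_simp

lemma hasSum_pred_div_prodQ (hP : Tendsto (prodQ q) atTop atTop) (n : ℕ) :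
    HasSum (fun t => ((q (t + n + 1) - 1 : ℕ) : ℝ) / prodQ q (t + n + 1)) (1 / prodQ q n) := by
  have partial_sum (N : ℕ) :
      ∑ t ∈ range N, ((q (t + n + 1) - 1 : ℕ) : ℝ) / prodQ q (t + n + 1) =
        1 / prodQ q n - 1 / prodQ q (N + n) := by
    simp only [pred_div_prodQ_succ hP]
    simpa only [zero_add, add_right_comm] using
      sum_range_sub' (fun t => 1 / prodQ q (t + n)) N
  have remainder : Tendsto (fun N => 1 / prodQ q (N + n)) atTop (nhds 0) := by
    simp only [one_div]
    exact (hP.comp (tendsto_add_atTop_nat n)).inv_tendsto_atTop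
  rw [hasSum_iff_tendsto_nat_of_nonneg
    fun t => div_nonneg (Nat.cast_nonneg _) (prodQ_pos hP _).le]
  simpa only [partial_sum, sub_zero] using remainder.const_sub (1 / prodQ q n)

end prodQ

section secondRep

variable {q i : ℕ → ℕ} {n : ℕ}

lemma sum_range_secondRep (q : ℕ → ℕ) (hn : 1 ≤ n) (hin : 1 ≤ i n) :
    ∑ k ∈ range n, (secondRep q i n (k + 1) : ℝ) / prodQ q (k + 1) =
      ∑ k ∈ range n, (i (k + 1) : ℝ) / prodQ q (k + 1) - 1 / prodQ q n := by
  obtain ⟨p, rfl⟩ := Nat.exists_eq_add_of_le' hn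
  have before (k : ℕ) (hk : k ∈ range p) : secondRep q i (p + 1) (k + 1) = i (k + 1) :=
    if_pos (by simpa using hk)
  have at_last : secondRep q i (p + 1) (p + 1) = i (p + 1) - 1 := by simp [secondRep]
  rw [sum_range_succ, sum_range_succ, at_last, Nat.cast_pred hin, sub_div, add_sub_assoc,
    sum_congr rfl fun k hk => by rw [before k hk]]

lemma hasCantorSum_of_forall_lt_eq_zero (q : ℕ → ℕ) (htail : ∀ k, n < k → i k = 0) :
    HasCantorSum q i (∑ k ∈ range n, (i (k + 1) : ℝ) / prodQ q (k + 1)) :=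
  hasSum_sum_of_ne_finset_zero fun k hk => by
    rw [htail (k + 1) (by simpa [Nat.lt_succ_iff] using hk), Nat.cast_zero, zero_div]

lemma hasCantorSum_secondRep (hP : Tendsto (prodQ q) atTop atTop) (hn : 1 ≤ n) (hin : 1 ≤ i n) :
    HasCantorSum q (secondRep q i n) (∑ k ∈ range n, (i (k + 1) : ℝ) / prodQ q (k + 1)) := by
  have after (t : ℕ) : secondRep q i n (t + n + 1) = q (t + n + 1) - 1 := by
    rw [secondRep, if_neg (by lia), if_neg (by lia)]
  refine (hasSum_nat_add_iff' n).1 ?_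
  simpa only [sum_range_secondRep q hn hin, sub_sub_cancel, after] using hasSum_pred_div_prodQ hP n

lemma secondRep_comp_strictMono {φ : ℕ → ℕ} (hφ : StrictMono φ) (q i : ℕ → ℕ) (n : ℕ) :
    secondRep q i (φ n) ∘ φ = secondRep (q ∘ φ) (i ∘ φ) n := by
  ext k
  simp only [secondRep, Function.comp_apply, hφ.lt_iff_lt, hφ.injective.eq_iff]

end secondRep

section skipIndex

variable {q i : ℕ → ℕ} {m n p : ℕ}

lemma skipIndex_of_lt (h : n < m) : skipIndex m n = n :=
  if_pos h

lemma skipIndex_of_le (h : m ≤ n) : skipIndex m n = n + 1 :=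
  if_neg h.not_gt

lemma skipIndex_strictMono (m : ℕ) : StrictMono (skipIndex m) := fun a b hab => by
  unfold skipIndex
  split_ifs <;> lia

lemma exists_skipIndex_eq (h : n ≠ m) : ∃ k, skipIndex m k = n := by
  rcases h.lt_or_gt with hlt | hgt
  · exact ⟨n, skipIndex_of_lt hlt⟩
  · exact ⟨n - 1, by rw [skipIndex_of_le (by lia)]; lia⟩

lemma prodQ_comp_skipIndex_of_lt (q : ℕ → ℕ) (h : n < m) :
    prodQ (q ∘ skipIndex m) n = prodQ q n :=
  prod_congr rfl fun j hj => by
    rw [Function.comp_apply, skipIndex_of_lt ((mem_Icc.1 hj).2.trans_lt h)]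

lemma prodQ_comp_skipIndex_add (q : ℕ → ℕ) (p t : ℕ) :
    prodQ (q ∘ skipIndex (p + 1)) (p + t) =
      prodQ q p * ∏ j ∈ Icc (p + 2) (p + 1 + t), (q j : ℝ) := by
  induction t with
  | zero => simp [prodQ_comp_skipIndex_of_lt]
  | succ t ih =>
    rw [← add_assoc, ← add_assoc, prodQ_succ, ih, prod_Icc_succ_top (by lia), mul_assoc,
      Function.comp_apply, skipIndex_of_le (by lia), add_right_comm p t 1]

lemma prodQ_comp_skipIndex_mul (q : ℕ → ℕ) (p t : ℕ) :
    prodQ (q ∘ skipIndex (p + 1)) (p + t) * q (p + 1) = prodQ q (p + 1 + t) := by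
  induction t with
  | zero => rw [add_zero, add_zero, prodQ_comp_skipIndex_of_lt q p.lt_succ_self, prodQ_succ]
  | succ t ih =>
    rw [← add_assoc, ← add_assoc, prodQ_succ, prodQ_succ, mul_right_comm, ih,
      Function.comp_apply, skipIndex_of_le (by lia), add_right_comm p t 1]

lemma tendsto_prodQ_comp_skipIndex (hP : Tendsto (prodQ q) atTop atTop) (p : ℕ) :
    Tendsto (prodQ (q ∘ skipIndex (p + 1))) atTop atTop := by
  have hbase : (0 : ℝ) < q (p + 1) := mod_cast base_pos hP p
  rw [← tendsto_add_atTop_iff_nat p, ← tendsto_mul_const_atTop_of_pos hbase]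
  refine (hP.comp (tendsto_add_atTop_nat (p + 1))).congr fun t => ?_
  rw [Function.comp_apply, add_comm t p, prodQ_comp_skipIndex_mul, add_comm t]

lemma HasCantorSum.sigmaC_eq {x : ℝ}
    (h : HasCantorSum (q ∘ skipIndex (p + 1)) (i ∘ skipIndex (p + 1)) x) :
    sigmaC q i (p + 1) = x := by
  rw [← h.tsum_eq, ← h.summable.sum_add_tsum_nat_add p, sigmaC, Nat.add_sub_cancel]
  congr 1
  · rw [range_eq_Ico, sum_Ico_add' (fun k => ((i ∘ skipIndex (p + 1)) k : ℝ) /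
      prodQ (q ∘ skipIndex (p + 1)) k), zero_add, Ico_add_one_right_eq_Icc]
    refine sum_congr rfl fun k hk => ?_
    have hk : k < p + 1 := Nat.lt_succ_of_le (mem_Icc.1 hk).2
    rw [prodQ_comp_skipIndex_of_lt q hk, Function.comp_apply, skipIndex_of_lt hk]
  · refine tsum_congr fun t => ?_
    have hk : t + p + 1 = p + (t + 1) := by lia
    rw [hk, prodQ_comp_skipIndex_add, Function.comp_apply, skipIndex_of_le (by lia)]
    congr! 3 <;> lia

end skipIndex

theorem stmt_7_general (q i : ℕ → ℕ) (hP : Tendsto (prodQ q) atTop atTop) (n : ℕ) (hn : 1 ≤ n)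
    (hin : 1 ≤ i n) (htail : ∀ k, n < k → i k = 0) (m : ℕ) (hm : 1 ≤ m) (hmn : m ≠ n) :
    sigmaC q i m = sigmaC q (secondRep q i n) m := by
  obtain ⟨p, rfl⟩ := Nat.exists_eq_add_of_le' hm
  obtain ⟨n', rfl⟩ := exists_skipIndex_eq hmn.symm
  set φ := skipIndex (p + 1)
  have hφ : StrictMono φ := skipIndex_strictMono (p + 1)
  have hφ_zero : φ 0 = 0 := skipIndex_of_lt p.succ_pos
  have hn' : 1 ≤ n' := hφ.lt_iff_lt.1 (hφ_zero.trans_lt hn)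
  have first := hasCantorSum_of_forall_lt_eq_zero (q ∘ φ) (i := i ∘ φ) (n := n')
    fun k hk => htail (φ k) (hφ hk)
  have second := hasCantorSum_secondRep (i := i ∘ φ) (tendsto_prodQ_comp_skipIndex hP p) hn' hin
  rw [← secondRep_comp_strictMono hφ] at second
  rw [first.sigmaC_eq, second.sigmaC_eq]

theorem stmt_7 (q i : ℕ → ℕ) (hq : ∀ n, 1 ≤ n → 2 ≤ q n)
    (hi : ∀ n, 1 ≤ n → i n ≤ q n - 1) (n : ℕ) (hn : 1 ≤ n)
    (hin : 1 ≤ i n) (htail : ∀ k, n < k → i k = 0)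
    (m : ℕ) (hm : 1 ≤ m) (hmn : m ≠ n) :
    sigmaC q i m =
      sigmaC q (fun k => if k < n then i k else if k = n then i n - 1 else q k - 1) m :=
  stmt_7_general q i (tendsto_prodQ_atTop hq) n hn hin htail m hm hmn
end

section
/- For every m ≥ 1, σ_m(x) = q_m·x + (1 − q_m)·Σ_{k=1}^{m−1} (−1)^{ρ_k} i_k/(q_1 ⋯ q_k) − (−1)^{ρ_m} i_m/(q_1 q_2 ⋯ q_{m−1}). -/
-- `(-1)^{ρ_n}` where `ρ_n = 1` if `n ∈ N_B` and `ρ_n = 2` otherwise.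
open Classical in
noncomputable def sgn (NB : Set ℕ) (n : ℕ) : ℝ := if n ∈ NB then -1 else 1

/-- The sign-variable Cantor series value `x = Σ_{n=1}^∞ (-1)^{ρ_n} i_n/(q_1 ⋯ q_n)`. -/
noncomputable def svCantorVal (NB : Set ℕ) (q i : ℕ → ℕ) : ℝ :=
  ∑' n : ℕ, sgn NB (n + 1) * (i (n + 1) : ℝ) / prodQ q (n + 1)

/-- The generalized shift operator for sign-variable Cantor series:
`σ_m = Σ_{k=1}^{m-1} (-1)^{ρ_k} i_k/(q_1⋯q_k)
      + Σ_{l=m+1}^∞ (-1)^{ρ_l} i_l/(q_1⋯q_{m-1} q_{m+1}⋯q_l)`. -/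
noncomputable def svSigma (NB : Set ℕ) (q i : ℕ → ℕ) (m : ℕ) : ℝ :=
  (∑ k ∈ Finset.Icc 1 (m - 1), sgn NB k * (i k : ℝ) / prodQ q k) +
    ∑' t : ℕ, sgn NB (m + 1 + t) * (i (m + 1 + t) : ℝ) /
      (prodQ q (m - 1) * ∏ j ∈ Finset.Icc (m + 1) (m + 1 + t), (q j : ℝ))

/-!
Deleting the index `m` from a Cantor series divides out the factor `q_m` from the denominator of
every later term and leaves the earlier terms alone. Splitting the series `x = S + t_m + R` at its
`m`-th term `t_m`, the shift is therefore `S + q_m R = q_m x + (1 - q_m) S - q_m t_m`. Convergence,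
which the splitting needs, comes from `‖a_n‖ ≤ ‖q_n‖ - 1`: the norm of the `n`-th term is at most
`1 / ‖q_1 ⋯ q_{n-1}‖ - 1 / ‖q_1 ⋯ q_n‖`, and these bounds telescope.
-/

open Finset

theorem prod_Icc_one_eq_mul {M : Type*} [CommMonoid M] (f : ℕ → M) {m n : ℕ} (hm : 1 ≤ m)
    (hmn : m ≤ n) :
    ∏ j ∈ Icc 1 n, f j = f m * ((∏ j ∈ Icc 1 (m - 1), f j) * ∏ j ∈ Icc (m + 1) n, f j) := by
  simp only [← Ico_add_one_right_eq_Icc, Nat.sub_add_cancel hm]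
  rw [← prod_Ico_consecutive f hm (by lia : m ≤ n + 1),
    prod_eq_prod_Ico_succ_bot (by lia : m < n + 1), mul_left_comm]

theorem sum_range_add_one_eq_sum_Icc {M : Type*} [AddCommMonoid M] (f : ℕ → M) (n : ℕ) :
    ∑ k ∈ range n, f (k + 1) = ∑ k ∈ Icc 1 n, f k := by
  rw [range_eq_Ico, sum_Ico_add', zero_add, Ico_add_one_right_eq_Icc]

/-- The `n`-th term `a_n / (q_1 ⋯ q_n)` of the Cantor series with bases `q` and digits `a`. The
digits are arbitrary field elements, so that signs can be absorbed into them. -/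
def cantorTerm {K : Type*} [Field K] (q a : ℕ → K) (n : ℕ) : K :=
  a n / ∏ j ∈ Icc 1 n, q j

/-- The value `∑_{n ≥ 1} a_n / (q_1 ⋯ q_n)` of a Cantor series over a topological field; it is `0`
when the series does not converge unconditionally. -/
noncomputable def cantorSeries {K : Type*} [Field K] [TopologicalSpace K] (q a : ℕ → K) : K :=
  ∑' n, cantorTerm q a (n + 1)

/-- The generalized shift `σ_m`, for `m ≥ 1`: the Cantor series with the digit `a_m` and the base
`q_m` deleted. The tail over `l > m` is indexed by `t = l - (m + 1)`. -/
noncomputable def generalizedShift {K : Type*} [Field K] [TopologicalSpace K] (q a : ℕ → K)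
    (m : ℕ) : K :=
  ∑ k ∈ Icc 1 (m - 1), cantorTerm q a k +
    ∑' t, a (m + 1 + t) / ((∏ j ∈ Icc 1 (m - 1), q j) * ∏ j ∈ Icc (m + 1) (m + 1 + t), q j)

section Algebra

variable {K : Type*} [Field K] {q : ℕ → K} {m : ℕ}

theorem mul_cantorTerm (a : ℕ → K) (hm : 1 ≤ m) (hqm : q m ≠ 0) {n : ℕ} (hmn : m ≤ n) :
    q m * cantorTerm q a n =
      a n / ((∏ j ∈ Icc 1 (m - 1), q j) * ∏ j ∈ Icc (m + 1) n, q j) := by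
  rw [cantorTerm, prod_Icc_one_eq_mul q hm hmn, ← mul_div_assoc, mul_div_mul_left _ _ hqm]

theorem mul_cantorTerm_self (a : ℕ → K) (hm : 1 ≤ m) (hqm : q m ≠ 0) :
    q m * cantorTerm q a m = a m / ∏ j ∈ Icc 1 (m - 1), q j := by
  simpa using mul_cantorTerm a hm hqm le_rfl

end Algebra

section Topological

variable {K : Type*} [Field K] [TopologicalSpace K] [IsTopologicalRing K] [T2Space K]
  {q a : ℕ → K} {m : ℕ}

theorem generalizedShift_eq_sum_add_mul_tsum (a : ℕ → K) (hm : 1 ≤ m) (hqm : q m ≠ 0) :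
    generalizedShift q a m =
      ∑ k ∈ Icc 1 (m - 1), cantorTerm q a k + q m * ∑' t, cantorTerm q a (m + 1 + t) := by
  rw [generalizedShift, ← tsum_mul_left]
  congr 1
  exact tsum_congr fun t ↦ (mul_cantorTerm a hm hqm (by lia)).symm

theorem cantorSeries_eq_sum_add_term_add_tsum
    (hsum : Summable fun n ↦ cantorTerm q a (n + 1)) (hm : 1 ≤ m) :
    cantorSeries q a = ∑ k ∈ Icc 1 (m - 1), cantorTerm q a k + cantorTerm q a m +
      ∑' t, cantorTerm q a (m + 1 + t) := by
  have hhead : ∑ k ∈ Icc 1 m, cantorTerm q a k =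
      ∑ k ∈ Icc 1 (m - 1), cantorTerm q a k + cantorTerm q a m := by
    obtain ⟨p, rfl⟩ := Nat.exists_eq_add_of_le' hm
    exact sum_Icc_succ_top (by lia) _
  rw [cantorSeries, ← hsum.sum_add_tsum_nat_add m, sum_range_add_one_eq_sum_Icc, hhead]
  congr 1
  exact tsum_congr fun t ↦ congrArg (cantorTerm q a) (by lia)

theorem stmt_13_general (hq : ∀ n, 1 ≤ n → q n ≠ 0)
    (hsum : Summable fun n ↦ cantorTerm q a (n + 1)) (hm : 1 ≤ m) :
    generalizedShift q a m =
      q m * cantorSeries q a + (1 - q m) * (∑ k ∈ Icc 1 (m - 1), cantorTerm q a k) -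
        a m / ∏ j ∈ Icc 1 (m - 1), q j := by
  rw [generalizedShift_eq_sum_add_mul_tsum a hm (hq m hm),
    cantorSeries_eq_sum_add_term_add_tsum hsum hm, ← mul_cantorTerm_self a hm (hq m hm)]
  ring

end Topological

section Normed

variable {K : Type*} [NormedField K] {q a : ℕ → K}

theorem norm_cantorTerm_succ_le {n : ℕ} (ha : ‖a (n + 1)‖ ≤ ‖q (n + 1)‖ - 1) :
    ‖cantorTerm q a (n + 1)‖ ≤
      ‖∏ j ∈ Icc 1 n, q j‖⁻¹ - ‖∏ j ∈ Icc 1 (n + 1), q j‖⁻¹ := by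
  have hq : ‖q (n + 1)‖ ≠ 0 := ne_of_gt <| by linarith [norm_nonneg (a (n + 1))]
  rw [cantorTerm, norm_div, prod_Icc_succ_top (by lia), norm_mul]
  calc ‖a (n + 1)‖ / (‖∏ j ∈ Icc 1 n, q j‖ * ‖q (n + 1)‖)
      ≤ (‖q (n + 1)‖ - 1) / (‖∏ j ∈ Icc 1 n, q j‖ * ‖q (n + 1)‖) := by gcongr
    _ = ‖∏ j ∈ Icc 1 n, q j‖⁻¹ - (‖∏ j ∈ Icc 1 n, q j‖ * ‖q (n + 1)‖)⁻¹ := by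
      rw [sub_div, one_div, div_mul_cancel_right₀ hq]

theorem summable_cantorTerm [CompleteSpace K] (ha : ∀ n, 1 ≤ n → ‖a n‖ ≤ ‖q n‖ - 1) :
    Summable fun n ↦ cantorTerm q a (n + 1) := by
  refine .of_norm <| summable_of_sum_range_le (c := 1) (fun _ ↦ norm_nonneg _) fun n ↦ ?_
  calc ∑ k ∈ range n, ‖cantorTerm q a (k + 1)‖
      ≤ ∑ k ∈ range n, (‖∏ j ∈ Icc 1 k, q j‖⁻¹ - ‖∏ j ∈ Icc 1 (k + 1), q j‖⁻¹) :=
        sum_le_sum fun k _ ↦ norm_cantorTerm_succ_le (ha _ k.succ_pos)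
    _ = 1 - ‖∏ j ∈ Icc 1 n, q j‖⁻¹ := by
        rw [sum_range_sub' fun k ↦ ‖∏ j ∈ Icc 1 k, q j‖⁻¹]
        simp
    _ ≤ 1 := sub_le_self _ (by positivity)

end Normed

theorem abs_sgn (NB : Set ℕ) (n : ℕ) : |sgn NB n| = 1 := by
  unfold sgn
  split_ifs <;> simp

theorem norm_sgn_mul_natCast_le (NB : Set ℕ) (n : ℕ) {d b : ℕ} (hb : 0 < b) (hd : d ≤ b - 1) :
    ‖sgn NB n * (d : ℝ)‖ ≤ ‖(b : ℝ)‖ - 1 := by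
  rw [norm_mul, Real.norm_eq_abs, abs_sgn, one_mul, Real.norm_natCast, Real.norm_natCast,
    le_sub_iff_add_le]
  exact_mod_cast (by lia : d + 1 ≤ b)

theorem stmt_13 (NB : Set ℕ) (q i : ℕ → ℕ) (hq : ∀ n, 1 ≤ n → 2 ≤ q n)
    (hi : ∀ n, 1 ≤ n → i n ≤ q n - 1) (m : ℕ) (hm : 1 ≤ m) :
    svSigma NB q i m =
      (q m : ℝ) * svCantorVal NB q i +
        (1 - (q m : ℝ)) * (∑ k ∈ Finset.Icc 1 (m - 1), sgn NB k * (i k : ℝ) / prodQ q k) -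
        sgn NB m * (i m : ℝ) / prodQ q (m - 1) := by
  have hq_pos (n : ℕ) (hn : 1 ≤ n) : 0 < q n := two_pos.trans_le (hq n hn)
  exact stmt_13_general (q := fun n ↦ (q n : ℝ)) (a := fun n ↦ sgn NB n * i n)
    (fun n hn ↦ Nat.cast_ne_zero.mpr (hq_pos n hn).ne')
    (summable_cantorTerm fun n hn ↦ norm_sgn_mul_natCast_le NB n (hq_pos n hn) (hi n hn)) hm
end

section
/- For every m ≥ 1, σ_m(x) = x/q_{i_m,m} − (a_{i_m,m}/q_{i_m,m})·∏_{j=1}^{m−1} q_{i_j,j} + (1 − 1/q_{i_m,m})·( a_{i_1,1} + Σ_{n=2}^{m−1} a_{i_n,n} ∏_{j=1}^{n−1} q_{i_j,j} ). -/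
/-- `a_{d,n} = Σ_{t=0}^{d-1} q_{t,n}` (so `a_{0,n} = 0`). -/
noncomputable def aQt (qt : ℕ → ℕ → ℝ) (d n : ℕ) : ℝ :=
  ∑ t ∈ Finset.range d, qt t n

/-- `∏_{j=1}^{n} q_{i_j,j}` (1-based indexing; `prodQt qt i 0 = 1`). -/
noncomputable def prodQt (qt : ℕ → ℕ → ℝ) (i : ℕ → ℕ) (n : ℕ) : ℝ :=
  ∏ j ∈ Finset.Icc 1 n, qt (i j) j

/-- The positive `Q̃`-expansion value
`x = a_{i_1,1} + Σ_{n=2}^∞ a_{i_n,n} ∏_{j=1}^{n-1} q_{i_j,j}`. -/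
noncomputable def qtVal (qt : ℕ → ℕ → ℝ) (i : ℕ → ℕ) : ℝ :=
  aQt qt (i 1) 1 + ∑' t : ℕ, aQt qt (i (t + 2)) (t + 2) * prodQt qt i (t + 1)

/-- The generalized shift operator for `Q̃`-expansions:
`σ_m = a_{i_1,1} + Σ_{n=2}^{m-1} a_{i_n,n} ∏_{j=1}^{n-1} q_{i_j,j}
      + Σ_{l=m+1}^∞ a_{i_l,l} ∏_{j=1, j≠m}^{l-1} q_{i_j,j}`
(the first two summands form the partial sum `Σ_{n=1}^{m-1}`, empty when `m = 1`). -/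
noncomputable def qtSigma (qt : ℕ → ℕ → ℝ) (i : ℕ → ℕ) (m : ℕ) : ℝ :=
  (∑ n ∈ Finset.Icc 1 (m - 1), aQt qt (i n) n * prodQt qt i (n - 1)) +
    ∑' t : ℕ, aQt qt (i (m + 1 + t)) (m + 1 + t) *
      (prodQt qt i (m - 1) * ∏ j ∈ Finset.Icc (m + 1) (m + t), qt (i j) j)

/-- `σ^m(x) = Σ_{l=m+1}^∞ a_{i_l,l} ∏_{j=m+1}^{l-1} q_{i_j,j}`. -/
noncomputable def qtShift (qt : ℕ → ℕ → ℝ) (i : ℕ → ℕ) (m : ℕ) : ℝ :=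
  ∑' t : ℕ, aQt qt (i (m + 1 + t)) (m + 1 + t) * ∏ j ∈ Finset.Icc (m + 1) (m + t), qt (i j) j

/-! Let `S` and `R` be the sums of the terms of `x` before and after position `m`. Deleting the
digit `i_m` fixes `S`, removes the `m`-th term, and divides `R` by `q_{i_m,m}`. Hence
`x = S + a_{i_m,m} ∏_{j<m} q_{i_j,j} + R` and `σ_m(x) = S + R / q_{i_m,m}`; eliminate `R`.
Splitting off the tail requires convergence: since `a_{i_n,n} + q_{i_n,n} ≤ 1`, the partial sums
telescope and stay below `1 - ∏_{j≤n} q_{i_j,j}`. -/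

open Finset

theorem sum_range_mul_prod_add_prod_le_one {R : Type*} [CommSemiring R] [PartialOrder R]
    [IsOrderedRing R] {a p : ℕ → R} (hp : ∀ n, 0 ≤ p n) (hap : ∀ n, a n + p n ≤ 1) (n : ℕ) :
    ∑ k ∈ range n, a k * ∏ j ∈ range k, p j + ∏ j ∈ range n, p j ≤ 1 := by
  induction n with
  | zero => simp
  | succ n ih =>
    calc ∑ k ∈ range (n + 1), a k * ∏ j ∈ range k, p j + ∏ j ∈ range (n + 1), p j
        = ∑ k ∈ range n, a k * ∏ j ∈ range k, p j + (a n + p n) * ∏ j ∈ range n, p j := by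
          rw [sum_range_succ, prod_range_succ]; ring
      _ ≤ ∑ k ∈ range n, a k * ∏ j ∈ range k, p j + ∏ j ∈ range n, p j := by
          gcongr
          exact mul_le_of_le_one_left (prod_nonneg fun j _ => hp j) (hap n)
      _ ≤ 1 := ih

theorem summable_mul_prod_range {a p : ℕ → ℝ} (ha : ∀ n, 0 ≤ a n) (hp : ∀ n, 0 ≤ p n)
    (hap : ∀ n, a n + p n ≤ 1) : Summable fun k => a k * ∏ j ∈ range k, p j := by
  have hprod (n : ℕ) : 0 ≤ ∏ j ∈ range n, p j := prod_nonneg fun j _ => hp j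
  exact summable_of_sum_range_le (fun k => mul_nonneg (ha k) (hprod k)) fun n =>
    (le_add_of_nonneg_right (hprod n)).trans (sum_range_mul_prod_add_prod_le_one hp hap n)

/-- The `k`-th term, counted from `0`, of the positive `Q̃`-expansion with digits `i`, that is
`a_{i_{k+1},k+1} ∏_{j=1}^{k} q_{i_j,j}`; it treats the leading term of `qtVal` like the others. -/
noncomputable def qtTerm (qt : ℕ → ℕ → ℝ) (i : ℕ → ℕ) (k : ℕ) : ℝ :=
  aQt qt (i (k + 1)) (k + 1) * prodQt qt i k

section Expansion

variable {qt : ℕ → ℕ → ℝ} {i : ℕ → ℕ}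

theorem aQt_add_self (qt : ℕ → ℕ → ℝ) (d n : ℕ) : aQt qt d n + qt d n = aQt qt (d + 1) n :=
  (sum_range_succ _ _).symm

theorem aQt_nonneg {d n : ℕ} (hq : ∀ t < d, 0 ≤ qt t n) : 0 ≤ aQt qt d n :=
  sum_nonneg fun t ht => hq t (mem_range.mp ht)

theorem aQt_le_aQt {c d n : ℕ} (hcd : c ≤ d) (hq : ∀ t < d, 0 ≤ qt t n) :
    aQt qt c n ≤ aQt qt d n :=
  sum_le_sum_of_subset_of_nonneg (range_subset_range.mpr hcd) fun t ht _ => hq t (mem_range.mp ht)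

theorem prodQt_eq_prod_range (qt : ℕ → ℕ → ℝ) (i : ℕ → ℕ) (n : ℕ) :
    prodQt qt i n = ∏ j ∈ range n, qt (i (j + 1)) (j + 1) := by
  rw [prodQt, range_eq_Ico, prod_Ico_add' (fun j => qt (i j) j), zero_add,
    Ico_add_one_right_eq_Icc]

theorem prodQt_succ (qt : ℕ → ℕ → ℝ) (i : ℕ → ℕ) (n : ℕ) :
    prodQt qt i (n + 1) = prodQt qt i n * qt (i (n + 1)) (n + 1) :=
  prod_Icc_succ_top (Nat.le_add_left 1 n) _

theorem prodQt_mul_prod_Icc (qt : ℕ → ℕ → ℝ) (i : ℕ → ℕ) (m t : ℕ) :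
    prodQt qt i m * ∏ j ∈ Icc (m + 1) (m + t), qt (i j) j = prodQt qt i (m + t) := by
  simp only [prodQt, ← Ico_add_one_right_eq_Icc]
  exact prod_Ico_consecutive _ (by omega) (by omega)

theorem sum_Icc_eq_sum_range_qtTerm (qt : ℕ → ℕ → ℝ) (i : ℕ → ℕ) (m : ℕ) :
    ∑ n ∈ Icc 1 m, aQt qt (i n) n * prodQt qt i (n - 1) = ∑ k ∈ range m, qtTerm qt i k := by
  rw [← Ico_add_one_right_eq_Icc, range_eq_Ico, ← zero_add 1, ← sum_Ico_add']
  rfl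

theorem summable_qtTerm {N : ℕ → ℕ} (hq : ∀ n, 1 ≤ n → ∀ d ≤ N n, 0 ≤ qt d n)
    (hN : ∀ n, 1 ≤ n → aQt qt (N n + 1) n ≤ 1) (hi : ∀ n, 1 ≤ n → i n ≤ N n) :
    Summable (qtTerm qt i) := by
  have hk (k : ℕ) : 1 ≤ k + 1 := Nat.le_add_left 1 k
  have ha_nonneg (k : ℕ) : 0 ≤ aQt qt (i (k + 1)) (k + 1) :=
    aQt_nonneg fun d hd => hq _ (hk k) d (hd.le.trans (hi _ (hk k)))
  have hq_nonneg (k : ℕ) : 0 ≤ qt (i (k + 1)) (k + 1) := hq _ (hk k) _ (hi _ (hk k))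
  have hadd_le_one (k : ℕ) : aQt qt (i (k + 1)) (k + 1) + qt (i (k + 1)) (k + 1) ≤ 1 :=
    calc aQt qt (i (k + 1)) (k + 1) + qt (i (k + 1)) (k + 1)
        = aQt qt (i (k + 1) + 1) (k + 1) := aQt_add_self qt _ _
      _ ≤ aQt qt (N (k + 1) + 1) (k + 1) :=
          aQt_le_aQt (Nat.succ_le_succ (hi _ (hk k))) fun d hd =>
            hq _ (hk k) d (Nat.le_of_lt_succ hd)
      _ ≤ 1 := hN _ (hk k)
  exact (summable_mul_prod_range ha_nonneg hq_nonneg hadd_le_one).congr fun k => by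
    rw [qtTerm, prodQt_eq_prod_range]

theorem qtVal_eq_tsum_qtTerm (hs : Summable (qtTerm qt i)) :
    qtVal qt i = ∑' k, qtTerm qt i k := by
  rw [hs.tsum_eq_zero_add]
  simp [qtVal, qtTerm, prodQt]

theorem qtTerm_add_succ_div {m : ℕ} (hq : qt (i (m + 1)) (m + 1) ≠ 0) (t : ℕ) :
    qtTerm qt i (t + (m + 1)) / qt (i (m + 1)) (m + 1) =
      aQt qt (i (m + 1 + 1 + t)) (m + 1 + 1 + t) *
        (prodQt qt i m * ∏ j ∈ Icc (m + 1 + 1) (m + 1 + t), qt (i j) j) := by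
  rw [qtTerm, add_comm t, ← prodQt_mul_prod_Icc, prodQt_succ, add_right_comm (m + 1) t 1]
  field_simp

theorem qtSigma_succ {m : ℕ} (hq : qt (i (m + 1)) (m + 1) ≠ 0) :
    qtSigma qt i (m + 1) = ∑ k ∈ range m, qtTerm qt i k +
      (∑' t, qtTerm qt i (t + (m + 1))) / qt (i (m + 1)) (m + 1) := by
  simp only [qtSigma, Nat.add_sub_cancel, sum_Icc_eq_sum_range_qtTerm, ← tsum_div_const,
    qtTerm_add_succ_div hq]

theorem stmt_16_general {m : ℕ} (hm : 1 ≤ m) (hq : qt (i m) m ≠ 0)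
    (hs : Summable (qtTerm qt i)) :
    qtSigma qt i m =
      qtVal qt i / qt (i m) m - aQt qt (i m) m / qt (i m) m * prodQt qt i (m - 1) +
        (1 - 1 / qt (i m) m) *
          (∑ n ∈ Icc 1 (m - 1), aQt qt (i n) n * prodQt qt i (n - 1)) := by
  obtain ⟨m, rfl⟩ := Nat.exists_eq_add_of_le' hm
  have hx : qtVal qt i = ∑ k ∈ range m, qtTerm qt i k +
      aQt qt (i (m + 1)) (m + 1) * prodQt qt i m + ∑' t, qtTerm qt i (t + (m + 1)) := by
    rw [qtVal_eq_tsum_qtTerm hs, ← hs.sum_add_tsum_nat_add (m + 1), sum_range_succ, qtTerm]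
  rw [qtSigma_succ hq, hx, Nat.add_sub_cancel, sum_Icc_eq_sum_range_qtTerm]
  field_simp
  ring

end Expansion

theorem stmt_16 (mS : ℕ → ℕ) (qt : ℕ → ℕ → ℝ) (i : ℕ → ℕ)
    (hmS : ∀ n, 1 ≤ n → 1 ≤ mS n)
    (hpos : ∀ n, 1 ≤ n → ∀ d, d ≤ mS n → 0 < qt d n)
    (hsum : ∀ n, 1 ≤ n → ∑ d ∈ Finset.range (mS n + 1), qt d n = 1)
    (hzero : ∀ d : ℕ → ℕ, (∀ j, 1 ≤ j → d j ≤ mS j) →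
      Filter.Tendsto (fun n => prodQt qt d n) Filter.atTop (nhds 0))
    (hdig : ∀ n, 1 ≤ n → i n ≤ mS n) (m : ℕ) (hm : 1 ≤ m) :
    qtSigma qt i m =
      qtVal qt i / qt (i m) m - aQt qt (i m) m / qt (i m) m * prodQt qt i (m - 1) +
        (1 - 1 / qt (i m) m) *
          (∑ n ∈ Finset.Icc 1 (m - 1), aQt qt (i n) n * prodQt qt i (n - 1)) := by
  exact stmt_16_general hm (hpos m hm _ (hdig m hm)).ne' <|
    summable_qtTerm (fun n hn d hd => (hpos n hn d hd).le) (fun n hn => (hsum n hn).le) hdig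
end
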